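/- Let m ≥ 1 and n ≥ 0 be integers. Suppose given real numbers b_i ≤ d_i and b'_i ≤ d'_i for i = 1,…,m (matched pairs of bars), and real numbers c_j ≤ e_j for j = 1,…,n (bars matched to the diagonal). Set R := max over i of (d_i − b_i) and S := Σ_{i=1}^m (|b_i − b'_i| + |d_i − d'_i|) + Σ_{j=1}^n (e_j − c_j), and assume S ≤ 1. Define the rank functions f := Σ_{i=1}^m 1_{T(b_i,d_i)} and g := Σ_{i=1}^m 1_{T(b'_i,d'_i)} + Σ_{j=1}^n 1_{T(c_j,e_j)}. Then ∫_{ℝ²} |f − g| dω ≤ (2R + 2) · S. -/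

import Mathlib

open MeasureTheory

/-- The triangular region `T(b,d) = {(x,y) : b ≤ x ≤ y ≤ d}` in the plane. -/
def Tri (b d : ℝ) : Set (ℝ × ℝ) := {q | b ≤ q.1 ∧ q.1 ≤ q.2 ∧ q.2 ≤ d}

/-!
Moving one bar from `[b, d)` to `[b', d')` changes its triangle only inside a vertical strip of
width `|b - b'|` and a horizontal strip of width `|d - d'|`, both of length at most the larger of
the two persistences. Along a matching of cost `S`, no persistence grows by more than `S` and no
bar matched to the diagonal is longer than `S`, so every strip has length at most `R + S`; adding
up their areas gives the bound `(R + S) * S`.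
-/

theorem measurableSet_tri (b d : ℝ) : MeasurableSet (Tri b d) :=
  (measurableSet_le measurable_const measurable_fst).inter
    ((measurableSet_le measurable_fst measurable_snd).inter
      (measurableSet_le measurable_snd measurable_const))

theorem measurable_indicator_tri (b d : ℝ) :
    Measurable ((Tri b d).indicator fun _ => (1 : ℝ)) :=
  measurable_const.indicator (measurableSet_tri b d)

theorem tri_subset_Icc_prod_Icc (b d : ℝ) : Tri b d ⊆ Set.Icc b d ×ˢ Set.Icc b d :=
  fun _ ⟨hb, hle, hd⟩ => ⟨⟨hb, hle.trans hd⟩, ⟨hb.trans hle, hd⟩⟩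

theorem tri_diff_tri_subset (b d b' d' : ℝ) :
    Tri b d \ Tri b' d' ⊆ Set.Ico b b' ×ˢ Set.Icc b d ∪ Set.Icc b d ×ˢ Set.Ioc d' d := by
  rintro q ⟨hq, hq'⟩
  obtain ⟨hx, hy⟩ := tri_subset_Icc_prod_Icc b d hq
  rcases lt_or_ge q.1 b' with hlt | hge
  · exact Or.inl ⟨⟨hx.1, hlt⟩, hy⟩
  · exact Or.inr ⟨hx, lt_of_not_ge fun hle => hq' ⟨hge, hq.2.1, hle⟩, hy.2⟩

theorem volume_tri_le (b d : ℝ) :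
    volume (Tri b d) ≤ ENNReal.ofReal (d - b) * ENNReal.ofReal (d - b) := by
  simpa only [Measure.volume_eq_prod, Measure.prod_prod, Real.volume_Icc] using
    measure_mono (μ := volume) (tri_subset_Icc_prod_Icc b d)

theorem volume_tri_diff_tri_le (b d b' d' : ℝ) :
    volume (Tri b d \ Tri b' d') ≤
      ENNReal.ofReal (d - b) * (ENNReal.ofReal (b' - b) + ENNReal.ofReal (d - d')) :=
  calc volume (Tri b d \ Tri b' d')
      ≤ volume (Set.Ico b b' ×ˢ Set.Icc b d) + volume (Set.Icc b d ×ˢ Set.Ioc d' d) :=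
        (measure_mono (tri_diff_tri_subset b d b' d')).trans (measure_union_le _ _)
    _ = ENNReal.ofReal (d - b) * (ENNReal.ofReal (b' - b) + ENNReal.ofReal (d - d')) := by
        simp only [Measure.volume_eq_prod, Measure.prod_prod, Real.volume_Ico, Real.volume_Icc,
          Real.volume_Ioc]
        ring

theorem ofReal_sub_add_ofReal_sub_eq (x y : ℝ) :
    ENNReal.ofReal (x - y) + ENNReal.ofReal (y - x) = ENNReal.ofReal |x - y| := by
  rcases le_total x y with h | h
  · rw [ENNReal.ofReal_of_nonpos (sub_nonpos.2 h), zero_add, abs_sub_comm,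
      abs_of_nonneg (sub_nonneg.2 h)]
  · rw [ENNReal.ofReal_of_nonpos (sub_nonpos.2 h), add_zero, abs_of_nonneg (sub_nonneg.2 h)]

theorem volume_symmDiff_tri_le {b d b' d' L : ℝ} (h : d - b ≤ L) (h' : d' - b' ≤ L) :
    volume (symmDiff (Tri b d) (Tri b' d')) ≤
      ENNReal.ofReal L * ENNReal.ofReal (|b - b'| + |d - d'|) :=
  calc volume (symmDiff (Tri b d) (Tri b' d'))
      ≤ volume (Tri b d \ Tri b' d') + volume (Tri b' d' \ Tri b d) := measure_union_le _ _
    _ ≤ ENNReal.ofReal (d - b) * (ENNReal.ofReal (b' - b) + ENNReal.ofReal (d - d')) +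
          ENNReal.ofReal (d' - b') * (ENNReal.ofReal (b - b') + ENNReal.ofReal (d' - d)) :=
        add_le_add (volume_tri_diff_tri_le b d b' d') (volume_tri_diff_tri_le b' d' b d)
    _ ≤ ENNReal.ofReal L * (ENNReal.ofReal (b' - b) + ENNReal.ofReal (d - d')) +
          ENNReal.ofReal L * (ENNReal.ofReal (b - b') + ENNReal.ofReal (d' - d)) := by
        gcongr
    _ = ENNReal.ofReal L * ENNReal.ofReal (|b - b'| + |d - d'|) := by
        rw [ENNReal.ofReal_add (abs_nonneg _) (abs_nonneg _),
          ← ofReal_sub_add_ofReal_sub_eq b b', ← ofReal_sub_add_ofReal_sub_eq d d']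
        ring

theorem eLpNorm_one_indicator_one {α : Type*} [MeasurableSpace α] {μ : Measure α} {s : Set α}
    (hs : MeasurableSet s) : eLpNorm (s.indicator fun _ => (1 : ℝ)) 1 μ = μ s := by
  simp [eLpNorm_indicator_const hs one_ne_zero ENNReal.one_ne_top]

variable {ι : Type*} [Fintype ι]

/-- The rank function of the persistence module with barcode `{[b i, d i)}`. The barcode is a
family rather than a multiset, so that a matching of bars is a pair of families with a common
index type; a bar with `d i < b i` contributes nothing. -/
noncomputable def rankFunction (b d : ι → ℝ) : ℝ × ℝ → ℝ :=
  fun q => ∑ i, (Tri (b i) (d i)).indicator (fun _ => (1 : ℝ)) q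

theorem rankFunction_eq_sum (b d : ι → ℝ) :
    rankFunction b d = ∑ i, (Tri (b i) (d i)).indicator fun _ => (1 : ℝ) := by
  ext q
  simp only [rankFunction, Finset.sum_apply]

theorem measurable_rankFunction (b d : ι → ℝ) : Measurable (rankFunction b d) :=
  Finset.measurable_sum _ fun i _ => measurable_indicator_tri (b i) (d i)

theorem eLpNorm_rankFunction_le {b d : ι → ℝ} {L : ℝ} (hbd : ∀ i, b i ≤ d i)
    (h : ∀ i, d i - b i ≤ L) :
    eLpNorm (rankFunction b d) 1 volume ≤ ENNReal.ofReal L * ENNReal.ofReal (∑ i, (d i - b i)) :=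
  calc eLpNorm (rankFunction b d) 1 volume
      ≤ ∑ i, eLpNorm ((Tri (b i) (d i)).indicator fun _ => (1 : ℝ)) 1 volume := by
        rw [rankFunction_eq_sum]
        exact eLpNorm_sum_le
          (fun i _ => (measurable_indicator_tri (b i) (d i)).aestronglyMeasurable) le_rfl
    _ = ∑ i, volume (Tri (b i) (d i)) :=
        Finset.sum_congr rfl fun i _ => eLpNorm_one_indicator_one (measurableSet_tri (b i) (d i))
    _ ≤ ∑ i, ENNReal.ofReal L * ENNReal.ofReal (d i - b i) := by
        refine Finset.sum_le_sum fun i _ => (volume_tri_le (b i) (d i)).trans ?_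
        gcongr
        exact h i
    _ = ENNReal.ofReal L * ENNReal.ofReal (∑ i, (d i - b i)) := by
        rw [← Finset.mul_sum, ENNReal.ofReal_sum_of_nonneg fun i _ => sub_nonneg.2 (hbd i)]

theorem eLpNorm_rankFunction_sub_le {b d b' d' : ι → ℝ} {L : ℝ} (h : ∀ i, d i - b i ≤ L)
    (h' : ∀ i, d' i - b' i ≤ L) :
    eLpNorm (rankFunction b d - rankFunction b' d') 1 volume ≤
      ENNReal.ofReal L * ENNReal.ofReal (∑ i, (|b i - b' i| + |d i - d' i|)) :=
  calc eLpNorm (rankFunction b d - rankFunction b' d') 1 volume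
      ≤ ∑ i, eLpNorm ((Tri (b i) (d i)).indicator (fun _ => (1 : ℝ)) -
          (Tri (b' i) (d' i)).indicator fun _ => (1 : ℝ)) 1 volume := by
        rw [rankFunction_eq_sum, rankFunction_eq_sum, ← Finset.sum_sub_distrib]
        exact eLpNorm_sum_le (fun i _ => ((measurable_indicator_tri (b i) (d i)).sub
          (measurable_indicator_tri (b' i) (d' i))).aestronglyMeasurable) le_rfl
    _ = ∑ i, volume (symmDiff (Tri (b i) (d i)) (Tri (b' i) (d' i))) := by
        refine Finset.sum_congr rfl fun i _ => ?_
        rw [eLpNorm_indicator_sub_indicator, eLpNorm_one_indicator_one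
          ((measurableSet_tri (b i) (d i)).symmDiff (measurableSet_tri (b' i) (d' i)))]
    _ ≤ ∑ i, ENNReal.ofReal L * ENNReal.ofReal (|b i - b' i| + |d i - d' i|) :=
        Finset.sum_le_sum fun i _ => volume_symmDiff_tri_le (h i) (h' i)
    _ = ENNReal.ofReal L * ENNReal.ofReal (∑ i, (|b i - b' i| + |d i - d' i|)) := by
        rw [← Finset.mul_sum, ENNReal.ofReal_sum_of_nonneg fun i _ => by positivity]

section Matching

variable {κ : Type*} [Fintype κ]

/-- The `ℓ¹` transport cost of the matching that pairs `[b i, d i)` with `[b' i, d' i)` and sends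
each `[c j, e j)` to the diagonal. -/
noncomputable def matchingCost (b d b' d' : ι → ℝ) (c e : κ → ℝ) : ℝ :=
  (∑ i, (|b i - b' i| + |d i - d' i|)) + ∑ j, (e j - c j)

variable {b d b' d' : ι → ℝ} {c e : κ → ℝ}

theorem matchingCost_nonneg (hce : ∀ j, c j ≤ e j) : 0 ≤ matchingCost b d b' d' c e :=
  add_nonneg (Finset.sum_nonneg fun _ _ => by positivity)
    (Finset.sum_nonneg fun j _ => sub_nonneg.2 (hce j))

theorem abs_sub_add_abs_sub_le_matchingCost (hce : ∀ j, c j ≤ e j) (i : ι) :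
    |b i - b' i| + |d i - d' i| ≤ matchingCost b d b' d' c e :=
  (Finset.single_le_sum (f := fun i => |b i - b' i| + |d i - d' i|)
    (fun _ _ => by positivity) (Finset.mem_univ i)).trans
    (le_add_of_nonneg_right (Finset.sum_nonneg fun j _ => sub_nonneg.2 (hce j)))

theorem persistence_le_matchingCost (hce : ∀ j, c j ≤ e j) (j : κ) :
    e j - c j ≤ matchingCost b d b' d' c e :=
  (Finset.single_le_sum (f := fun j => e j - c j)
    (fun j _ => sub_nonneg.2 (hce j)) (Finset.mem_univ j)).trans
    (le_add_of_nonneg_left (Finset.sum_nonneg fun _ _ => by positivity))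

theorem persistence_le_add_matchingCost (hce : ∀ j, c j ≤ e j) (i : ι) :
    d' i - b' i ≤ d i - b i + matchingCost b d b' d' c e := by
  linarith [abs_sub_add_abs_sub_le_matchingCost (b := b) (d := d) (b' := b') (d' := d') hce i,
    le_abs_self (b i - b' i), neg_abs_le (d i - d' i)]

theorem stmt_7_general {R : ℝ} (hR₀ : 0 ≤ R) (hR : ∀ i, d i - b i ≤ R)
    (hce : ∀ j, c j ≤ e j) :
    ∫⁻ q, ENNReal.ofReal |rankFunction b d q - (rankFunction b' d' q + rankFunction c e q)| ≤
      ENNReal.ofReal ((R + matchingCost b d b' d' c e) * matchingCost b d b' d' c e) := by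
  set S := matchingCost b d b' d' c e with hS
  have hS₀ : 0 ≤ S := matchingCost_nonneg hce
  have matched_le : eLpNorm (rankFunction b d - rankFunction b' d') 1 volume ≤
      ENNReal.ofReal (R + S) * ENNReal.ofReal (∑ i, (|b i - b' i| + |d i - d' i|)) :=
    eLpNorm_rankFunction_sub_le (fun i => (hR i).trans (le_add_of_nonneg_right hS₀))
      (fun i => (persistence_le_add_matchingCost hce i).trans (by gcongr; exact hR i))
  have unmatched_le : eLpNorm (rankFunction c e) 1 volume ≤
      ENNReal.ofReal (R + S) * ENNReal.ofReal (∑ j, (e j - c j)) :=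
    eLpNorm_rankFunction_le hce
      (fun j => (persistence_le_matchingCost hce j).trans (le_add_of_nonneg_left hR₀))
  calc ∫⁻ q, ENNReal.ofReal |rankFunction b d q - (rankFunction b' d' q + rankFunction c e q)|
      = eLpNorm (rankFunction b d - (rankFunction b' d' + rankFunction c e)) 1 volume := by
        simp only [eLpNorm_one_eq_lintegral_enorm, Real.enorm_eq_ofReal_abs, Pi.sub_apply,
          Pi.add_apply]
    _ ≤ eLpNorm (rankFunction b d - rankFunction b' d') 1 volume +
          eLpNorm (rankFunction c e) 1 volume := by
        rw [← sub_sub]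
        exact eLpNorm_sub_le
          ((measurable_rankFunction b d).sub (measurable_rankFunction b' d')).aestronglyMeasurable
          (measurable_rankFunction c e).aestronglyMeasurable le_rfl
    _ ≤ ENNReal.ofReal (R + S) * ENNReal.ofReal (∑ i, (|b i - b' i| + |d i - d' i|)) +
          ENNReal.ofReal (R + S) * ENNReal.ofReal (∑ j, (e j - c j)) :=
        add_le_add matched_le unmatched_le
    _ = ENNReal.ofReal ((R + S) * S) := by
        rw [← mul_add, ← ENNReal.ofReal_add (Finset.sum_nonneg fun i _ => by positivity)
          (Finset.sum_nonneg fun j _ => sub_nonneg.2 (hce j)), ENNReal.ofReal_mul' hS₀, hS,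
          matchingCost]

end Matching

/-- 1-Wasserstein stability for rank functions, case `p = 1`: with `S ≤ 1` the
`ℓ¹` transport cost of the matching and `R` the maximum persistence of the first
barcode, the `L¹` distance between the rank functions is at most `(2R + 2)·S`. -/
theorem stmt_7 (m n : ℕ) (hm : 1 ≤ m)
    (b d b' d' : Fin m → ℝ) (c e : Fin n → ℝ)
    (hbd : ∀ i, b i ≤ d i) (hbd' : ∀ i, b' i ≤ d' i) (hce : ∀ j, c j ≤ e j)
    (R S : ℝ)
    (hR : R = Finset.univ.sup' ⟨⟨0, hm⟩, Finset.mem_univ _⟩ (fun i => d i - b i))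
    (hS : S = (∑ i, (|b i - b' i| + |d i - d' i|)) + ∑ j, (e j - c j))
    (hS1 : S ≤ 1)
    (f g : ℝ × ℝ → ℝ)
    (hf : f = fun x => ∑ i, (Tri (b i) (d i)).indicator (fun _ => (1 : ℝ)) x)
    (hg : g = fun x =>
      (∑ i, (Tri (b' i) (d' i)).indicator (fun _ => (1 : ℝ)) x)
        + ∑ j, (Tri (c j) (e j)).indicator (fun _ => (1 : ℝ)) x) :
    (∫⁻ x, ENNReal.ofReal |f x - g x|) ≤ ENNReal.ofReal ((2 * R + 2) * S) := by
  have persistence_le (i : Fin m) : d i - b i ≤ R :=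
    hR ▸ Finset.le_sup' (fun i => d i - b i) (Finset.mem_univ i)
  have hR₀ : 0 ≤ R := (sub_nonneg.2 (hbd ⟨0, hm⟩)).trans (persistence_le _)
  have hS₀ : 0 ≤ S := hS ▸ matchingCost_nonneg hce
  calc ∫⁻ x, ENNReal.ofReal |f x - g x|
      ≤ ENNReal.ofReal ((R + S) * S) := hf ▸ hg ▸ hS ▸ stmt_7_general hR₀ persistence_le hce
    _ ≤ ENNReal.ofReal ((2 * R + 2) * S) :=
        ENNReal.ofReal_le_ofReal (mul_le_mul_of_nonneg_right (by linarith) hS₀)
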